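/- arXiv:2405.02570 — 2 statements merged into one kernel-verified Lean document; each statement's English description precedes it below -/
import Mathlib

section
/- Let d ≥ 1, t > 0, s > 0, and fix multi-indices α, γ ∈ ℕ^d. On a probability space, let (W^m, Z^m)_{m≥1} be an i.i.d. sequence of ℝ^d × ℝ^d-valued random vectors with common law ν_t ⊗ ν_s. Then, almost surely, as M → ∞, (1/M) Σ_{m=1}^M (H_α^{(t)}(W^m) + ⟨∇H_α^{(t)}(W^m), Z^m⟩)(H_γ^{(t)}(W^m) + ⟨∇H_γ^{(t)}(W^m), Z^m⟩) converges to 1 + |α|·s/t if α = γ, and to 0 if α ≠ γ. -/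
open MeasureTheory ProbabilityTheory

/-- The centered Gaussian product measure `ν_t` on `Fin d → ℝ` with variance `t` per coordinate. -/
noncomputable def gaussPi (d : ℕ) (t : ℝ) : Measure (Fin d → ℝ) :=
  Measure.pi fun _ => gaussianReal 0 t.toNNReal

/-- Normalized generalized Hermite polynomial `H_n^{(t)}(y) = H_n(y/√t)/√(n!)`,
where `H_n` is the probabilists' Hermite polynomial. -/
noncomputable def Hgen (t : ℝ) (n : ℕ) (y : ℝ) : ℝ :=
  Polynomial.aeval (y / Real.sqrt t) (Polynomial.hermite n) / Real.sqrt (Nat.factorial n)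

/-- Tensorized Hermite polynomial `H_α^{(t)}(y) = ∏_j H_{α_j}^{(t)}(y_j)`. -/
noncomputable def HgenMulti (d : ℕ) (t : ℝ) (α : Fin d → ℕ) (y : Fin d → ℝ) : ℝ :=
  ∏ j, Hgen t (α j) (y j)

/-- Partial derivative of `f : ℝ^d → ℝ` in the `j`-th coordinate at `y`. -/
noncomputable def pd (d : ℕ) (f : (Fin d → ℝ) → ℝ) (j : Fin d) (y : Fin d → ℝ) : ℝ :=
  deriv (fun s => f (Function.update y j s)) (y j)

/-!
For a centered random vector `Z` with covariance `s • 1`, independent of `W`, averaging over `Z`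
first kills the terms linear in `Z` and gives
`E[(f(W) + ⟨∇f(W), Z⟩)(g(W) + ⟨∇g(W), Z⟩)] = E[f(W) g(W)] + s ∑ⱼ E[∂ⱼf(W) ∂ⱼg(W)]`.
For `f = H_α` and `g = H_γ` the first expectation is `δ_{αγ}` by orthonormality of the Hermite
polynomials, which is repeated Gaussian integration by parts; and since
`∂ⱼ H_α = √(αⱼ / t) H_{α - eⱼ}`, the sum is `δ_{αγ} |α| / t`. The strong law of large numbers
turns the expectation into the almost sure limit.
-/

open Filter Polynomial Topology
open scoped NNReal Nat

section StrongLaw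

variable {Ω A E : Type*} [MeasurableSpace Ω] [MeasurableSpace A] {μ : Measure Ω} {π : Measure A}
  [NormedAddCommGroup E] [NormedSpace ℝ E] [CompleteSpace E] [MeasurableSpace E] [BorelSpace E]

theorem ae_tendsto_average_comp_of_hasLaw {X : ℕ → Ω → A} {F : A → E} (hF : Integrable F π)
    (hindep : Pairwise (Function.onFun (· ⟂ᵢ[μ] ·) X)) (hlaw : ∀ m, HasLaw (X m) π μ) :
    ∀ᵐ ω ∂μ, Tendsto (fun M : ℕ ↦ (M : ℝ)⁻¹ • ∑ m ∈ Finset.range M, F (X m ω)) atTop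
      (𝓝 (∫ a, F a ∂π)) := by
  have hF_map (m : ℕ) : Integrable F (μ.map (X m)) := (hlaw m).map_eq ▸ hF
  have hF_meas (m : ℕ) : AEMeasurable F (μ.map (X m)) := (hF_map m).aemeasurable
  have hident (m : ℕ) : IdentDistrib (X m) (X 0) μ μ :=
    ⟨(hlaw m).aemeasurable, (hlaw 0).aemeasurable, (hlaw m).map_eq.trans (hlaw 0).map_eq.symm⟩
  have hmean : ∫ ω, F (X 0 ω) ∂μ = ∫ a, F a ∂π :=
    (hlaw 0).integral_comp hF.aestronglyMeasurable
  rw [← hmean]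
  exact strong_law_ae (fun m ω ↦ F (X m ω)) ((hF_map 0).comp_aemeasurable (hlaw 0).aemeasurable)
    (fun i j hij ↦ (hindep hij).comp₀ (hlaw i).aemeasurable (hlaw j).aemeasurable
      (hF_meas i) (hF_meas j))
    (fun m ↦ (hident m).comp_of_aemeasurable (hF_meas m))

end StrongLaw

section Isotropic

variable {ι A : Type*} [Fintype ι] [DecidableEq ι] [MeasurableSpace A]

/-- The law `ν` of a square-integrable random vector with mean zero and covariance matrix `s • 1`.
This is all that the limit of the Gram matrix sees of the law of the increments. -/
structure IsCenteredIsotropic (ν : Measure (ι → ℝ)) (s : ℝ) : Prop where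
  memLp_two : ∀ j, MemLp (fun z ↦ z j) 2 ν
  integral_eq_zero : ∀ j, ∫ z, z j ∂ν = 0
  integral_mul : ∀ i j, ∫ z, z i * z j ∂ν = if i = j then s else 0

namespace IsCenteredIsotropic

theorem pi {κ : Measure ℝ} [IsProbabilityMeasure κ] (hκ : MemLp id 2 κ) (hmean : ∫ x, x ∂κ = 0) :
    IsCenteredIsotropic (Measure.pi fun _ : ι ↦ κ) (∫ x, x ^ 2 ∂κ) := by
  have hcoord (j : ι) : ∫ z, z j ∂(Measure.pi fun _ : ι ↦ κ) = 0 :=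
    (integral_comp_eval (μ := fun _ : ι ↦ κ) (f := id) (by fun_prop)).trans hmean
  refine ⟨fun j ↦ hκ.comp_measurePreserving (measurePreserving_eval _ j), hcoord, fun i j ↦ ?_⟩
  split_ifs with hij
  · subst hij
    simp_rw [← sq]
    exact integral_comp_eval (μ := fun _ : ι ↦ κ) (f := fun x ↦ x ^ 2) (by fun_prop)
  · have hindep : (fun z : ι → ℝ ↦ z i) ⟂ᵢ[Measure.pi fun _ : ι ↦ κ] (fun z ↦ z j) :=
      (iIndepFun_pi (μ := fun _ : ι ↦ κ) (X := fun _ ↦ id) fun _ ↦ aemeasurable_id).indepFun hij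
    rw [hindep.integral_fun_mul_eq_mul_integral (measurable_pi_apply i).aestronglyMeasurable
      (measurable_pi_apply j).aestronglyMeasurable, hcoord i, zero_mul]

variable {ν : Measure (ι → ℝ)} {s : ℝ}

theorem integral_sum_mul [IsFiniteMeasure ν] (hν : IsCenteredIsotropic ν s) (b : ι → ℝ) :
    ∫ z, ∑ j, b j * z j ∂ν = 0 := by
  rw [integral_finsetSum _ fun j _ ↦ ((hν.memLp_two j).integrable one_le_two).const_mul (b j)]
  simp [integral_const_mul, hν.integral_eq_zero]

theorem integral_sum_mul_mul_sum_mul (hν : IsCenteredIsotropic ν s) (b c : ι → ℝ) :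
    ∫ z, (∑ j, b j * z j) * ∑ j, c j * z j ∂ν = s * ∑ j, b j * c j := by
  have hint (i j : ι) : Integrable (fun z ↦ b i * c j * (z i * z j)) ν :=
    ((hν.memLp_two i).integrable_mul (hν.memLp_two j)).const_mul _
  simp_rw [Finset.sum_mul_sum, mul_mul_mul_comm]
  rw [integral_finsetSum _ fun i _ ↦ integrable_finsetSum _ fun j _ ↦ hint i j, Finset.mul_sum]
  refine Finset.sum_congr rfl fun i _ ↦ ?_
  rw [integral_finsetSum _ fun j _ ↦ hint i j]
  simp [integral_const_mul, hν.integral_mul, mul_comm]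

theorem memLp_sum_mul (hν : IsCenteredIsotropic ν s) (b : ι → ℝ) :
    MemLp (fun z ↦ ∑ j, b j * z j) 2 ν :=
  memLp_finsetSum _ fun j _ ↦ (hν.memLp_two j).const_mul (b j)

theorem integral_affine_mul_affine [IsProbabilityMeasure ν] (hν : IsCenteredIsotropic ν s)
    (b₀ c₀ : ℝ) (b c : ι → ℝ) :
    ∫ z, (b₀ + ∑ j, b j * z j) * (c₀ + ∑ j, c j * z j) ∂ν = b₀ * c₀ + s * ∑ j, b j * c j := by
  have hb : Integrable (fun z ↦ ∑ j, b j * z j) ν := (hν.memLp_sum_mul b).integrable one_le_two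
  have hc : Integrable (fun z ↦ ∑ j, c j * z j) ν := (hν.memLp_sum_mul c).integrable one_le_two
  have hbc : Integrable (fun z ↦ (∑ j, b j * z j) * ∑ j, c j * z j) ν :=
    (hν.memLp_sum_mul b).integrable_mul (hν.memLp_sum_mul c)
  calc ∫ z, (b₀ + ∑ j, b j * z j) * (c₀ + ∑ j, c j * z j) ∂ν
      = ∫ z, b₀ * c₀ + b₀ * (∑ j, c j * z j) + c₀ * (∑ j, b j * z j)
          + (∑ j, b j * z j) * ∑ j, c j * z j ∂ν := by congr with z; ring
    _ = b₀ * c₀ + s * ∑ j, b j * c j := by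
      rw [integral_add (by fun_prop) hbc, integral_add (by fun_prop) (by fun_prop),
        integral_add (by fun_prop) (by fun_prop), hν.integral_sum_mul_mul_sum_mul]
      simp [integral_const_mul, hν.integral_sum_mul]

variable {ρ : Measure A} {f₀ g₀ : A → ℝ} {f g : ι → A → ℝ}

theorem memLp_affine_prod [IsFiniteMeasure ν] (hν : IsCenteredIsotropic ν s) (hf₀ : MemLp f₀ 2 ρ)
    (hf : ∀ j, MemLp (f j) 2 ρ) :
    MemLp (fun p : A × (ι → ℝ) ↦ f₀ p.1 + ∑ j, f j p.1 * p.2 j) 2 (ρ.prod ν) := by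
  refine (hf₀.comp_fst ν).add (memLp_finsetSum _ fun j _ ↦ ?_)
  have hmeas : AEStronglyMeasurable (fun p : A × (ι → ℝ) ↦ f j p.1 * p.2 j) (ρ.prod ν) :=
    (hf j).aestronglyMeasurable.comp_fst.mul (hν.memLp_two j).aestronglyMeasurable.comp_snd
  rw [memLp_two_iff_integrable_sq hmeas]
  simp_rw [mul_pow]
  exact (hf j).integrable_sq.mul_prod (hν.memLp_two j).integrable_sq

theorem integrable_affine_mul_affine_prod [IsFiniteMeasure ν] (hν : IsCenteredIsotropic ν s)
    (hf₀ : MemLp f₀ 2 ρ) (hg₀ : MemLp g₀ 2 ρ)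
    (hf : ∀ j, MemLp (f j) 2 ρ) (hg : ∀ j, MemLp (g j) 2 ρ) :
    Integrable (fun p : A × (ι → ℝ) ↦
      (f₀ p.1 + ∑ j, f j p.1 * p.2 j) * (g₀ p.1 + ∑ j, g j p.1 * p.2 j)) (ρ.prod ν) :=
  (hν.memLp_affine_prod hf₀ hf).integrable_mul (hν.memLp_affine_prod hg₀ hg)

theorem integral_affine_mul_affine_prod [SFinite ρ] [IsProbabilityMeasure ν]
    (hν : IsCenteredIsotropic ν s) (hf₀ : MemLp f₀ 2 ρ) (hg₀ : MemLp g₀ 2 ρ)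
    (hf : ∀ j, MemLp (f j) 2 ρ) (hg : ∀ j, MemLp (g j) 2 ρ) :
    ∫ p : A × (ι → ℝ), (f₀ p.1 + ∑ j, f j p.1 * p.2 j) * (g₀ p.1 + ∑ j, g j p.1 * p.2 j)
        ∂(ρ.prod ν)
      = ∫ w, f₀ w * g₀ w ∂ρ + s * ∑ j, ∫ w, f j w * g j w ∂ρ := by
  have hfg (j : ι) : Integrable (fun w ↦ f j w * g j w) ρ := (hf j).integrable_mul (hg j)
  have hfg₀ : Integrable (fun w ↦ f₀ w * g₀ w) ρ := hf₀.integrable_mul hg₀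
  rw [integral_prod _ (hν.integrable_affine_mul_affine_prod hf₀ hg₀ hf hg)]
  simp_rw [hν.integral_affine_mul_affine]
  rw [integral_add hfg₀ ((integrable_finsetSum _ fun j _ ↦ hfg j).const_mul s),
    integral_const_mul, integral_finsetSum _ fun j _ ↦ hfg j]

end IsCenteredIsotropic

end Isotropic

section GaussianIntegrationByParts

variable {m : ℝ} {v : ℝ≥0}

theorem hasDerivAt_gaussianPDFReal (m : ℝ) (v : ℝ≥0) (x : ℝ) :
    HasDerivAt (gaussianPDFReal m v) (-((x - m) / v) * gaussianPDFReal m v x) x := by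
  have hexponent : HasDerivAt (fun x : ℝ ↦ -(x - m) ^ 2 / (2 * v)) (-((x - m) / v)) x := by
    refine ((((hasDerivAt_id x).sub_const m).pow 2).neg.div_const (2 * (v : ℝ))).congr_deriv ?_
    simp only [id, Nat.cast_ofNat, Nat.add_one_sub_one, pow_one]
    field_simp
  rw [gaussianPDFReal_def]
  exact (hexponent.exp.const_mul _).congr_deriv (by ring)

variable {E : Type*} [NormedAddCommGroup E] [NormedSpace ℝ E] {f f' : ℝ → E}

theorem integrable_gaussianReal_iff (hv : v ≠ 0) :
    Integrable f (gaussianReal m v) ↔ Integrable fun x ↦ gaussianPDFReal m v x • f x := by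
  rw [gaussianReal_of_var_ne_zero _ hv, integrable_withDensity_iff_integrable_smul'
    (measurable_gaussianPDF _ _) (ae_of_all _ fun _ ↦ gaussianPDF_lt_top)]
  simp only [toReal_gaussianPDF]

theorem integral_sub_smul_gaussianReal [CompleteSpace E] (hf : ∀ x, HasDerivAt f (f' x) x)
    (hf_int : Integrable f (gaussianReal m v)) (hf'_int : Integrable f' (gaussianReal m v))
    (hxf_int : Integrable (fun x ↦ (x - m) • f x) (gaussianReal m v)) :
    ∫ x, (x - m) • f x ∂(gaussianReal m v) = v • ∫ x, f' x ∂(gaussianReal m v) := by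
  rcases eq_or_ne v 0 with rfl | hv
  · simp
  have hv' : (v : ℝ) ≠ 0 := by exact_mod_cast hv
  have hderiv (x : ℝ) : HasDerivAt (fun x ↦ gaussianPDFReal m v x • f x)
      (gaussianPDFReal m v x • (f' x - (v : ℝ)⁻¹ • (x - m) • f x)) x := by
    refine ((hasDerivAt_gaussianPDFReal m v x).smul (hf x)).congr_deriv ?_
    module
  have hzero : ∫ x, f' x - (v : ℝ)⁻¹ • (x - m) • f x ∂(gaussianReal m v) = 0 := by
    rw [integral_gaussianReal_eq_integral_smul hv]
    exact integral_eq_zero_of_hasDerivAt_of_integrable hderiv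
      ((integrable_gaussianReal_iff hv).1 (hf'_int.sub (hxf_int.smul _)))
      ((integrable_gaussianReal_iff hv).1 hf_int)
  rw [integral_sub hf'_int (hxf_int.fun_smul _), integral_smul, sub_eq_zero] at hzero
  rw [hzero, NNReal.smul_def, smul_inv_smul₀ hv']

theorem integrable_pow_gaussianReal (m : ℝ) (v : ℝ≥0) (n : ℕ) :
    Integrable (fun x ↦ x ^ n) (gaussianReal m v) := by
  refine (integrable_norm_iff (by fun_prop)).1 ?_
  simpa only [norm_pow, id] using
    (memLp_id_gaussianReal' (μ := m) (v := v) n (by simp)).integrable_norm_pow'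

variable {R : Type*} [CommSemiring R] [Algebra R ℝ]

theorem integrable_aeval_gaussianReal (m : ℝ) (v : ℝ≥0) (p : R[X]) :
    Integrable (fun x ↦ aeval x p) (gaussianReal m v) := by
  simp_rw [aeval_eq_sum_range, Algebra.smul_def]
  exact integrable_finsetSum _ fun n _ ↦ (integrable_pow_gaussianReal m v n).const_mul _

theorem integral_aeval_X_mul_gaussianReal (v : ℝ≥0) (p : R[X]) :
    ∫ x, aeval x (X * p) ∂(gaussianReal 0 v)
      = v * ∫ x, aeval x (derivative p) ∂(gaussianReal 0 v) := by
  have hXp := integrable_aeval_gaussianReal 0 v (X * p)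
  simp only [map_mul, aeval_X] at hXp ⊢
  simpa [NNReal.smul_def] using integral_sub_smul_gaussianReal (m := 0) (v := v)
    p.hasDerivAt_aeval (integrable_aeval_gaussianReal 0 v p)
    (integrable_aeval_gaussianReal 0 v _) (by simpa using hXp)

end GaussianIntegrationByParts

section Hermite

theorem derivative_hermite_succ (n : ℕ) :
    derivative (hermite (n + 1)) = (n + 1 : ℤ[X]) * hermite n := by
  induction n with
  | zero => simp
  | succ n ih =>
    have hderiv₂ : derivative (derivative (hermite (n + 1)))
        = (n + 1 : ℤ[X]) * derivative (hermite n) := by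
      rw [ih]; simp
    rw [hermite_succ (n + 1), derivative_sub, derivative_mul, derivative_X, hderiv₂, ih,
      hermite_succ n]
    push_cast
    ring

theorem integral_aeval_hermite_succ_mul (n : ℕ) (q : ℤ[X]) :
    ∫ x, aeval x (hermite (n + 1) * q) ∂(gaussianReal 0 1)
      = ∫ x, aeval x (hermite n * derivative q) ∂(gaussianReal 0 1) := by
  have hsplit : hermite (n + 1) * q
      = X * (hermite n * q) - derivative (hermite n * q) + hermite n * derivative q := by
    rw [hermite_succ, derivative_mul]; ring
  simp only [hsplit, map_add, map_sub]
  have hint (p : ℤ[X]) := integrable_aeval_gaussianReal 0 1 p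
  rw [integral_add ((hint _).sub' (hint _)) (hint _), integral_sub (hint _) (hint _),
    integral_aeval_X_mul_gaussianReal]
  simp

theorem integral_aeval_hermite_mul_hermite (n k : ℕ) :
    ∫ x, aeval x (hermite n * hermite k) ∂(gaussianReal 0 1) = if n = k then (n ! : ℝ) else 0 := by
  induction n generalizing k with
  | zero =>
    cases k with
    | zero => simp
    | succ k => rw [mul_comm, integral_aeval_hermite_succ_mul]; simp
  | succ n ih =>
    rw [integral_aeval_hermite_succ_mul]
    cases k with
    | zero => simp
    | succ k =>
      have hpull : hermite n * derivative (hermite (k + 1))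
          = (k + 1 : ℤ[X]) * (hermite n * hermite k) := by
        rw [derivative_hermite_succ]; ring
      simp only [hpull, map_mul _ (_ + 1 : ℤ[X]), map_add, map_natCast, map_one]
      rw [integral_const_mul, ih]
      by_cases h : n = k
      · subst h; simp [Nat.factorial_succ]
      · simp [h]

end Hermite

section Hgen

variable {t : ℝ}

theorem Hgen_mul_Hgen (t : ℝ) (n k : ℕ) (y : ℝ) :
    Hgen t n y * Hgen t k y = (√(n !) * √(k !))⁻¹ * aeval (y / √t) (hermite n * hermite k) := by
  rw [Hgen, Hgen, map_mul]
  field_simp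

theorem hasDerivAt_Hgen (t : ℝ) (n : ℕ) (y : ℝ) :
    HasDerivAt (Hgen t n) (√(n / t) * Hgen t (n - 1) y) y := by
  have hchain : HasDerivAt (Hgen t n)
      (aeval (y / √t) (derivative (hermite n)) * (1 / √t) / √(n !)) y :=
    (((hermite n).hasDerivAt_aeval (y / √t)).comp y
      ((hasDerivAt_id y).div_const (√t))).div_const _
  refine hchain.congr_deriv ?_
  cases n with
  | zero => simp
  | succ n =>
    have hsq : √((n : ℝ) + 1) ^ 2 = n + 1 := Real.sq_sqrt (by positivity)
    rw [Hgen, derivative_hermite_succ, Nat.factorial_succ, Real.sqrt_div (by positivity)]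
    simp only [Nat.add_sub_cancel, map_mul, map_add, map_natCast, map_one, Nat.cast_mul,
      Nat.cast_add, Nat.cast_one]
    rw [Real.sqrt_mul (by positivity)]
    field_simp
    rw [hsq, mul_comm]

theorem continuous_Hgen (t : ℝ) (n : ℕ) : Continuous (Hgen t n) :=
  continuous_iff_continuousAt.2 fun y ↦ (hasDerivAt_Hgen t n y).continuousAt

theorem gaussianReal_map_div_sqrt (ht : 0 < t) :
    (gaussianReal 0 t.toNNReal).map (· / √t) = gaussianReal 0 1 := by
  rw [gaussianReal_map_div_const]
  congr 1
  · simp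
  · ext
    simp [ht.le, ht.ne']

theorem integrable_Hgen_mul_Hgen (ht : 0 < t) (n k : ℕ) :
    Integrable (fun y ↦ Hgen t n y * Hgen t k y) (gaussianReal 0 t.toNNReal) := by
  have hstd := integrable_aeval_gaussianReal 0 1 (hermite n * hermite k)
  rw [← gaussianReal_map_div_sqrt ht] at hstd
  simp_rw [Hgen_mul_Hgen]
  exact (hstd.comp_measurable (by fun_prop)).const_mul _

theorem integral_Hgen_mul_Hgen (ht : 0 < t) (n k : ℕ) :
    ∫ y, Hgen t n y * Hgen t k y ∂(gaussianReal 0 t.toNNReal) = if n = k then 1 else 0 := by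
  have hstd := integral_aeval_hermite_mul_hermite n k
  rw [← gaussianReal_map_div_sqrt ht, integral_map (by fun_prop)
    (hermite n * hermite k).continuous_aeval.aestronglyMeasurable] at hstd
  simp_rw [Hgen_mul_Hgen]
  rw [integral_const_mul, hstd]
  split_ifs with hnk
  · subst hnk
    rw [Real.mul_self_sqrt (by positivity), inv_mul_cancel₀ (by positivity)]
  · simp

end Hgen

section HgenMulti

variable {d : ℕ} {t : ℝ}

instance (d : ℕ) (t : ℝ) : IsProbabilityMeasure (gaussPi d t) := by
  unfold gaussPi; infer_instance

theorem isCenteredIsotropic_gaussPi (d : ℕ) {s : ℝ} (hs : 0 ≤ s) :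
    IsCenteredIsotropic (gaussPi d s) s := by
  have hmean : ∫ x, x ∂(gaussianReal 0 s.toNNReal) = 0 := integral_id_gaussianReal
  have hvar : ∫ x, x ^ 2 ∂(gaussianReal 0 s.toNNReal) = s := by
    have h := variance_id_gaussianReal (μ := 0) (v := s.toNNReal)
    rw [variance_of_integral_eq_zero aemeasurable_id hmean] at h
    simpa [hs] using h
  simpa only [gaussPi, hvar] using
    IsCenteredIsotropic.pi (ι := Fin d) (memLp_id_gaussianReal (v := s.toNNReal) 2) hmean

theorem HgenMulti_mul_HgenMulti (t : ℝ) (α γ : Fin d → ℕ) (y : Fin d → ℝ) :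
    HgenMulti d t α y * HgenMulti d t γ y = ∏ j, Hgen t (α j) (y j) * Hgen t (γ j) (y j) :=
  Finset.prod_mul_distrib.symm

theorem memLp_HgenMulti (ht : 0 < t) (α : Fin d → ℕ) :
    MemLp (HgenMulti d t α) 2 (gaussPi d t) := by
  have hcont : Continuous (HgenMulti d t α) :=
    continuous_finsetProd _ fun j _ ↦ (continuous_Hgen t (α j)).comp (continuous_apply j)
  rw [memLp_two_iff_integrable_sq hcont.aestronglyMeasurable]
  simp_rw [sq, HgenMulti_mul_HgenMulti]
  exact Integrable.fintype_prod (f := fun j y ↦ Hgen t (α j) y * Hgen t (α j) y)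
    fun j ↦ integrable_Hgen_mul_Hgen ht (α j) (α j)

theorem integral_HgenMulti_mul_HgenMulti (ht : 0 < t) (α γ : Fin d → ℕ) :
    ∫ y, HgenMulti d t α y * HgenMulti d t γ y ∂(gaussPi d t) = if α = γ then 1 else 0 := by
  simp_rw [HgenMulti_mul_HgenMulti]
  rw [gaussPi, integral_fintype_prod_eq_prod (fun j y ↦ Hgen t (α j) y * Hgen t (γ j) y)]
  simp_rw [integral_Hgen_mul_Hgen ht, Finset.prod_boole, Finset.mem_univ, true_imp_iff, funext_iff]

theorem pd_HgenMulti (t : ℝ) (α : Fin d → ℕ) (j : Fin d) (y : Fin d → ℝ) :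
    pd d (HgenMulti d t α) j y = √(α j / t) * HgenMulti d t (α - Pi.single j 1) y := by
  have hsplit (β : Fin d → ℕ) (x : ℝ) (hβ : ∀ i ≠ j, β i = α i) :
      HgenMulti d t β (Function.update y j x)
        = Hgen t (β j) x * ∏ i ∈ Finset.univ.erase j, Hgen t (α i) (y i) := by
    rw [HgenMulti, ← Finset.mul_prod_erase _ _ (Finset.mem_univ j), Function.update_self]
    congr 1
    refine Finset.prod_congr rfl fun i hi ↦ ?_
    have hij : i ≠ j := Finset.ne_of_mem_erase hi
    rw [hβ i hij, Function.update_of_ne hij]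
  have hlower := hsplit (α - Pi.single j 1) (y j) fun i hij ↦ by simp [hij]
  rw [Function.update_eq_self] at hlower
  simp_rw [pd, hsplit α _ fun _ _ ↦ rfl]
  rw [((hasDerivAt_Hgen t (α j) (y j)).mul_const _).deriv, hlower]
  simp [mul_assoc]

theorem memLp_pd_HgenMulti (ht : 0 < t) (α : Fin d → ℕ) (j : Fin d) :
    MemLp (pd d (HgenMulti d t α) j) 2 (gaussPi d t) := by
  rw [funext (pd_HgenMulti t α j)]
  exact (memLp_HgenMulti ht _).const_mul _

theorem single_one_le_iff {ι : Type*} [DecidableEq ι] {α : ι → ℕ} {j : ι} :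
    Pi.single j 1 ≤ α ↔ 0 < α j := by
  simp [Pi.single, update_le_iff, Nat.one_le_iff_ne_zero, Nat.pos_iff_ne_zero]

theorem integral_pd_HgenMulti_mul_pd_HgenMulti (ht : 0 < t) (α γ : Fin d → ℕ) (j : Fin d) :
    ∫ y, pd d (HgenMulti d t α) j y * pd d (HgenMulti d t γ) j y ∂(gaussPi d t)
      = if α = γ then (α j : ℝ) / t else 0 := by
  simp_rw [pd_HgenMulti, mul_mul_mul_comm]
  rw [integral_const_mul, integral_HgenMulti_mul_HgenMulti ht]
  rcases eq_or_ne α γ with rfl | hne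
  · rw [if_pos rfl, if_pos rfl, mul_one, Real.mul_self_sqrt (by positivity)]
  rw [if_neg hne]
  -- Lowering is injective only on indices with positive `j`-th entry; elsewhere `√(αⱼ / t) = 0`.
  rcases Nat.eq_zero_or_pos (α j) with hα | hα
  · simp [hα]
  rcases Nat.eq_zero_or_pos (γ j) with hγ | hγ
  · simp [hγ]
  rw [if_neg, mul_zero]
  rwa [tsub_left_inj (single_one_le_iff.2 hα) (single_one_le_iff.2 hγ)]

end HgenMulti

section Gram

variable {d : ℕ} {t s : ℝ} {ν : Measure (Fin d → ℝ)} [IsProbabilityMeasure ν]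

theorem integral_gram_entry (ht : 0 < t) (α γ : Fin d → ℕ) (hν : IsCenteredIsotropic ν s) :
    ∫ p : (Fin d → ℝ) × (Fin d → ℝ),
        (HgenMulti d t α p.1 + ∑ j, pd d (HgenMulti d t α) j p.1 * p.2 j)
          * (HgenMulti d t γ p.1 + ∑ j, pd d (HgenMulti d t γ) j p.1 * p.2 j)
        ∂((gaussPi d t).prod ν)
      = if α = γ then 1 + ((∑ j, α j : ℕ) : ℝ) * s / t else 0 := by
  rw [hν.integral_affine_mul_affine_prod (memLp_HgenMulti ht α) (memLp_HgenMulti ht γ)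
    (memLp_pd_HgenMulti ht α) (memLp_pd_HgenMulti ht γ), integral_HgenMulti_mul_HgenMulti ht]
  simp_rw [integral_pd_HgenMulti_mul_pd_HgenMulti ht]
  split_ifs
  · rw [← Finset.sum_div, Nat.cast_sum]
    ring
  · simp

theorem gram_entry_lln_general {Ω : Type*} [MeasurableSpace Ω] {μ : Measure Ω} (ht : 0 < t)
    (α γ : Fin d → ℕ) (hν : IsCenteredIsotropic ν s) {X : ℕ → Ω → (Fin d → ℝ) × (Fin d → ℝ)}
    (hindep : Pairwise (Function.onFun (· ⟂ᵢ[μ] ·) X))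
    (hlaw : ∀ m, HasLaw (X m) ((gaussPi d t).prod ν) μ) :
    ∀ᵐ ω ∂μ, Tendsto
      (fun M : ℕ ↦ (M : ℝ)⁻¹ * ∑ m ∈ Finset.range M,
        (HgenMulti d t α (X m ω).1 + ∑ j, pd d (HgenMulti d t α) j (X m ω).1 * (X m ω).2 j)
          * (HgenMulti d t γ (X m ω).1 + ∑ j, pd d (HgenMulti d t γ) j (X m ω).1 * (X m ω).2 j))
      atTop
      (𝓝 (if α = γ then 1 + ((∑ j, α j : ℕ) : ℝ) * s / t else 0)) := by
  rw [← integral_gram_entry ht α γ hν]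
  exact ae_tendsto_average_comp_of_hasLaw
    (hν.integrable_affine_mul_affine_prod (memLp_HgenMulti ht α) (memLp_HgenMulti ht γ)
      (memLp_pd_HgenMulti ht α) (memLp_pd_HgenMulti ht γ)) hindep hlaw

end Gram

/-- Almost-sure convergence of the entries of the normalized gradient-enhanced Gram matrix
`M⁻¹ A_k^⊤ A_k` for an i.i.d. sequence `(Wᵐ, Zᵐ)` with common law `ν_t ⊗ ν_s`. -/
theorem gram_entry_lln {Ω : Type*} [MeasurableSpace Ω] (μ : Measure Ω) [IsProbabilityMeasure μ]
    (d : ℕ) (hd : 1 ≤ d) (t s : ℝ) (ht : 0 < t) (hs : 0 < s) (α γ : Fin d → ℕ)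
    (X : ℕ → Ω → (Fin d → ℝ) × (Fin d → ℝ))
    (hmeas : ∀ m, Measurable (X m))
    (hindep : iIndepFun X μ)
    (hdist : ∀ m, Measure.map (X m) μ = (gaussPi d t).prod (gaussPi d s)) :
    ∀ᵐ ω ∂μ, Filter.Tendsto
      (fun M : ℕ => (M : ℝ)⁻¹ * ∑ m ∈ Finset.range M,
        (HgenMulti d t α (X m ω).1 + ∑ j, pd d (HgenMulti d t α) j (X m ω).1 * (X m ω).2 j)
          * (HgenMulti d t γ (X m ω).1 + ∑ j, pd d (HgenMulti d t γ) j (X m ω).1 * (X m ω).2 j))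
      Filter.atTop
      (nhds (if α = γ then 1 + ((∑ j, α j : ℕ) : ℝ) * s / t else 0)) :=
  gram_entry_lln_general ht α γ (isCenteredIsotropic_gaussPi d hs.le)
    (fun _ _ hij ↦ hindep.indepFun hij) (fun m ↦ ⟨(hmeas m).aemeasurable, hdist m⟩)
end

section
/- Let d ≥ 1, t > 0, s > 0. Let u : ℝ^d → ℝ be measurable with ∫∫ u(w+z)²(1 + ‖z‖²) dν_s(z) dν_t(w) < ∞, and let ψ : ℝ^d → ℝ be continuously differentiable such that ψ and ‖∇ψ‖ have at most polynomial growth. Define c(w) := ∫ u(w+z) dν_s(z) and Ž(w) := (1/s) ∫ u(w+z)·z dν_s(z) ∈ ℝ^d. Then ∫_{ℝ^d} ∫_{ℝ^d} (u(w+z) − ψ(w) − ⟨∇ψ(w), z⟩)² dν_s(z) dν_t(w) = ∫ (c(w) − ψ(w))² dν_t(w) + s·∫ ‖Ž(w) − ∇ψ(w)‖² dν_t(w) + R, where R := ∫∫ (u(w+z) − c(w))² dν_s(z) dν_t(w) − s·∫ ‖Ž(w)‖² dν_t(w) does not depend on ψ. -/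
open MeasureTheory ProbabilityTheory

/-- Gaussian smoothing (continuation value) `c(w) = ∫ u(w+z) dν_s(z)`. -/
noncomputable def contVal (d : ℕ) (s : ℝ) (u : (Fin d → ℝ) → ℝ) (w : Fin d → ℝ) : ℝ :=
  ∫ z, u (w + z) ∂(gaussPi d s)

/-- Backward-Euler gradient estimate `Ž(w)_j = (1/s) ∫ u(w+z)·z_j dν_s(z)`. -/
noncomputable def zEst (d : ℕ) (s : ℝ) (u : (Fin d → ℝ) → ℝ) (w : Fin d → ℝ) (j : Fin d) : ℝ :=
  (1 / s) * ∫ z, u (w + z) * z j ∂(gaussPi d s)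

/-- The gradient-enhanced least squares loss
`L(ψ) = ∫∫ (u(w+z) − ψ(w) − ⟨∇ψ(w), z⟩)² dν_s(z) dν_t(w)`. -/
noncomputable def gLoss (d : ℕ) (t s : ℝ) (u ψ : (Fin d → ℝ) → ℝ) : ℝ :=
  ∫ w, (∫ z, (u (w + z) - ψ w - ∑ j, pd d ψ j w * z j) ^ 2 ∂(gaussPi d s)) ∂(gaussPi d t)

/-! Fix `w` and regress `z ↦ u (w + z)` on the constant `1` and the coordinates `z_j`. Under `ν_s`
the coordinates are centred and uncorrelated with common variance `s`, so `c w` and `Ž w` are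
exactly the regression coefficients, and Pythagoras splits the squared residual of any other affine
predictor into the errors of its coefficients plus the squared residual of the best one,
`Var[u (w + ·)] - s ‖Ž w‖²`. It remains to integrate over `w`, where the
Cauchy–Schwarz inequality bounds `c` and `Ž` in `L²` by `(w, z) ↦ u (w + z)`. -/

section Regression

variable {Ω ι : Type*} {mΩ : MeasurableSpace Ω} {ν : Measure Ω} {s : ℝ}
  {X : ι → Ω → ℝ} {f : Ω → ℝ}

/-- A family of square-integrable random variables that are centred and pairwise uncorrelated with
common variance `s`: the regressors of the least squares problem, of which the Gaussian increments
are the model case. -/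
structure IsIsotropicFamily (X : ι → Ω → ℝ) (s : ℝ) (ν : Measure Ω) : Prop where
  memLp : ∀ j, MemLp (X j) 2 ν
  integral_eq_zero : ∀ j, ∫ z, X j z ∂ν = 0
  variance_eq : ∀ j, Var[X j; ν] = s
  covariance_eq_zero : Pairwise fun i j => cov[X i, X j; ν] = 0

/-- The coefficient of `X j` in the least squares regression of `f` on the constant `1` and an
isotropic family `X` of variance `s`. It is meaningful only for `s ≠ 0`. -/
noncomputable def regressionCoeff (X : ι → Ω → ℝ) (s : ℝ) (ν : Measure Ω) (f : Ω → ℝ) (j : ι) : ℝ :=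
  (1 / s) * ∫ z, f z * X j z ∂ν

namespace IsIsotropicFamily

lemma covariance_eq_mul_regressionCoeff [IsProbabilityMeasure ν] (hX : IsIsotropicFamily X s ν)
    (hs : s ≠ 0) (hf : MemLp f 2 ν) (j : ι) :
    cov[f, X j; ν] = s * regressionCoeff X s ν f j := by
  rw [covariance_eq_sub hf (hX.memLp j), hX.integral_eq_zero, mul_zero, sub_zero, regressionCoeff,
    ← mul_assoc, mul_one_div_cancel hs, one_mul]
  rfl

variable [Fintype ι]

lemma memLp_sum_mul (hX : IsIsotropicFamily X s ν) (b : ι → ℝ) :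
    MemLp (fun z => ∑ j, b j * X j z) 2 ν :=
  memLp_finsetSum _ fun j _ => (hX.memLp j).const_mul (b j)

lemma variance_sum_mul [IsFiniteMeasure ν] (hX : IsIsotropicFamily X s ν) (b : ι → ℝ) :
    Var[fun z => ∑ j, b j * X j z; ν] = s * ∑ j, b j ^ 2 := by
  rw [variance_fun_sum fun j => (hX.memLp j).const_mul (b j), Finset.mul_sum]
  refine Finset.sum_congr rfl fun i _ => ?_
  simp only [covariance_const_mul_left, covariance_const_mul_right]
  rw [Finset.sum_eq_single_of_mem i (Finset.mem_univ i) fun j _ hji => by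
      rw [hX.covariance_eq_zero hji.symm, mul_zero, mul_zero],
    covariance_self (hX.memLp i).aemeasurable, hX.variance_eq]
  ring

variable [IsProbabilityMeasure ν]

lemma integral_sum_mul (hX : IsIsotropicFamily X s ν) (b : ι → ℝ) :
    ∫ z, ∑ j, b j * X j z ∂ν = 0 := by
  rw [integral_finsetSum _ fun j _ => ((hX.memLp j).integrable one_le_two).const_mul (b j)]
  simp only [integral_const_mul, hX.integral_eq_zero, mul_zero, Finset.sum_const_zero]

lemma covariance_sum_mul (hX : IsIsotropicFamily X s ν) (hs : s ≠ 0) (hf : MemLp f 2 ν)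
    (b : ι → ℝ) :
    cov[f, fun z => ∑ j, b j * X j z; ν] = s * ∑ j, b j * regressionCoeff X s ν f j := by
  rw [covariance_fun_sum_right (fun j => (hX.memLp j).const_mul (b j)) hf, Finset.mul_sum]
  refine Finset.sum_congr rfl fun j _ => ?_
  rw [covariance_const_mul_right, hX.covariance_eq_mul_regressionCoeff hs hf]
  ring

lemma integral_sub_sub_sum_mul (hX : IsIsotropicFamily X s ν) (hf : Integrable f ν)
    (a : ℝ) (b : ι → ℝ) :
    ∫ z, (f z - a - ∑ j, b j * X j z) ∂ν = ∫ z, f z ∂ν - a := by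
  have hfa : Integrable (fun z => f z - a) ν := hf.sub (integrable_const a)
  rw [integral_sub hfa ((hX.memLp_sum_mul b).integrable one_le_two), hX.integral_sum_mul, sub_zero,
    integral_sub hf (integrable_const a), integral_const, probReal_univ, one_smul]

lemma variance_sub_sub_sum_mul (hX : IsIsotropicFamily X s ν) (hs : s ≠ 0) (hf : MemLp f 2 ν)
    (a : ℝ) (b : ι → ℝ) :
    Var[fun z => f z - a - ∑ j, b j * X j z; ν]
      = Var[f; ν] - s * ∑ j, regressionCoeff X s ν f j ^ 2
        + s * ∑ j, (regressionCoeff X s ν f j - b j) ^ 2 := by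
  have expand_sq : ∑ j, (regressionCoeff X s ν f j - b j) ^ 2
      = ∑ j, regressionCoeff X s ν f j ^ 2 - 2 * ∑ j, b j * regressionCoeff X s ν f j
        + ∑ j, b j ^ 2 := by
    rw [Finset.mul_sum, ← Finset.sum_sub_distrib, ← Finset.sum_add_distrib]
    exact Finset.sum_congr rfl fun j _ => by ring
  simp only [sub_right_comm _ a]
  rw [variance_sub_const (hf.aestronglyMeasurable.fun_sub
      (hX.memLp_sum_mul b).aestronglyMeasurable),
    variance_fun_sub hf (hX.memLp_sum_mul b), hX.covariance_sum_mul hs hf, hX.variance_sum_mul,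
    expand_sq]
  ring

theorem integral_sq_sub_sub_sum_mul (hX : IsIsotropicFamily X s ν) (hs : s ≠ 0)
    (hf : MemLp f 2 ν) (a : ℝ) (b : ι → ℝ) :
    ∫ z, (f z - a - ∑ j, b j * X j z) ^ 2 ∂ν
      = (∫ z, f z ∂ν - a) ^ 2 + s * ∑ j, (regressionCoeff X s ν f j - b j) ^ 2
        + (Var[f; ν] - s * ∑ j, regressionCoeff X s ν f j ^ 2) := by
  have hresidual : MemLp (fun z => f z - a - ∑ j, b j * X j z) 2 ν :=
    (hf.sub (memLp_const a)).sub (hX.memLp_sum_mul b)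
  calc ∫ z, (f z - a - ∑ j, b j * X j z) ^ 2 ∂ν
    _ = Var[fun z => f z - a - ∑ j, b j * X j z; ν]
        + (∫ z, (f z - a - ∑ j, b j * X j z) ∂ν) ^ 2 := by
      rw [variance_eq_sub hresidual, sub_add_cancel]
      rfl
    _ = _ := by
      rw [hX.variance_sub_sub_sum_mul hs hf, hX.integral_sub_sub_sum_mul
        (hf.integrable one_le_two)]
      ring

end IsIsotropicFamily

lemma isIsotropicFamily_eval_pi [Fintype ι] {ρ : ι → Measure ℝ} [∀ j, IsProbabilityMeasure (ρ j)]
    (hρ : ∀ j, MemLp id 2 (ρ j)) (mean_zero : ∀ j, ∫ x, x ∂(ρ j) = 0)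
    (variance_eq : ∀ j, Var[id; ρ j] = s) :
    IsIsotropicFamily (fun j (z : ι → ℝ) => z j) s (Measure.pi ρ) := by
  have memLp_eval (j : ι) : MemLp (fun z : ι → ℝ => z j) 2 (Measure.pi ρ) :=
    (hρ j).comp_measurePreserving (measurePreserving_eval ρ j)
  refine ⟨memLp_eval, fun j => ?_, fun j => ?_, fun i j hij => ?_⟩
  · rw [integral_eval, mean_zero]
  · rw [← variance_id_map (measurable_pi_apply j).aemeasurable,
      (measurePreserving_eval ρ j).map_eq, variance_eq]
  · exact ((iIndepFun_pi (X := fun _ x => x) fun _ => aemeasurable_id).indepFun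
      hij).covariance_eq_zero (memLp_eval i) (memLp_eval j)

end Regression

section Marginals

variable {α Ω : Type*} {mα : MeasurableSpace α} {mΩ : MeasurableSpace Ω} {μ : Measure α}
  {ν : Measure Ω}

lemma sq_integral_mul_le {f g : Ω → ℝ} (hf : MemLp f 2 ν) (hg : MemLp g 2 ν) :
    (∫ z, f z * g z ∂ν) ^ 2 ≤ (∫ z, f z ^ 2 ∂ν) * ∫ z, g z ^ 2 ∂ν := by
  have inner_toLp {f g : Ω → ℝ} (hf : MemLp f 2 ν) (hg : MemLp g 2 ν) :
      inner ℝ (hf.toLp f) (hg.toLp g) = ∫ z, f z * g z ∂ν := by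
    refine integral_congr_ae ?_
    filter_upwards [hf.coeFn_toLp, hg.coeFn_toLp] with z hfz hgz
    simp only [hfz, hgz, RCLike.inner_apply, conj_trivial, mul_comm]
  simpa only [inner_toLp, ← sq] using real_inner_mul_inner_self_le (hf.toLp f) (hg.toLp g)

lemma ae_memLp_two_of_memLp_prod [SFinite ν] {F : α → Ω → ℝ}
    (hF : MemLp (fun p : α × Ω => F p.1 p.2) 2 (μ.prod ν)) : ∀ᵐ w ∂μ, MemLp (F w) 2 ν := by
  filter_upwards [((integrable_prod_iff hF.integrable_sq.1).1 hF.integrable_sq).1,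
    hF.aestronglyMeasurable.prodMk_left] with w sq_integrable measurable
  exact (memLp_two_iff_integrable_sq measurable).2 sq_integrable

lemma memLp_two_integral_mul [SFinite ν] {F : α → Ω → ℝ} {g : Ω → ℝ}
    (hF : MemLp (fun p : α × Ω => F p.1 p.2) 2 (μ.prod ν)) (hg : MemLp g 2 ν) :
    MemLp (fun w => ∫ z, F w z * g z ∂ν) 2 μ := by
  have measurable : AEStronglyMeasurable (fun w => ∫ z, F w z * g z ∂ν) μ :=
    (hF.aestronglyMeasurable.mul hg.aestronglyMeasurable.comp_snd).integral_prod_right'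
  rw [memLp_two_iff_integrable_sq measurable]
  refine (hF.integrable_sq.integral_prod_left.mul_const (∫ z, g z ^ 2 ∂ν)).mono'
    (measurable.pow 2) ?_
  filter_upwards [ae_memLp_two_of_memLp_prod hF] with w hFw
  rw [Real.norm_of_nonneg (sq_nonneg _)]
  exact sq_integral_mul_le hFw hg

lemma memLp_two_integral [IsFiniteMeasure ν] {F : α → Ω → ℝ}
    (hF : MemLp (fun p : α × Ω => F p.1 p.2) 2 (μ.prod ν)) :
    MemLp (fun w => ∫ z, F w z ∂ν) 2 μ := by
  simpa only [mul_one] using memLp_two_integral_mul hF (memLp_const (1 : ℝ))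

end Marginals

lemma memLp_two_of_integrable_sq_mul {α : Type*} {mα : MeasurableSpace α} {μ : Measure α}
    {f g : α → ℝ} (hf : AEStronglyMeasurable f μ) (one_le : ∀ x, 1 ≤ g x)
    (hfg : Integrable (fun x => f x ^ 2 * g x) μ) : MemLp f 2 μ := by
  rw [memLp_two_iff_integrable_sq hf]
  refine hfg.mono' (hf.pow 2) (.of_forall fun x => ?_)
  rw [Real.norm_of_nonneg (sq_nonneg _)]
  exact le_mul_of_one_le_right (sq_nonneg _) (one_le x)

section PolynomialGrowth

variable {E G : Type*} [NormedAddCommGroup E] [MeasurableSpace E] [NormedAddCommGroup G]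
  {μ : Measure E} [IsFiniteMeasure μ] {p : ENNReal}

lemma memLp_one_add_norm_pow (moments : ∀ q : ENNReal, q ≠ ⊤ → MemLp id q μ) (hp : p ≠ ⊤) :
    ∀ n : ℕ, MemLp (fun x : E => (1 + ‖x‖) ^ n) p μ
  | 0 => by simpa only [pow_zero] using memLp_const (1 : ℝ)
  | n + 1 => by
    have hn : ((n + 1 : ℕ) : ENNReal) ≠ ⊤ := ENNReal.natCast_ne_top _
    have base : MemLp (fun x : E => 1 + ‖x‖) (p * (n + 1 : ℕ)) μ :=
      (memLp_const (1 : ℝ)).add (moments _ (ENNReal.mul_ne_top hp hn)).norm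
    have power := base.norm_rpow_div (n + 1 : ℕ)
    rw [ENNReal.mul_div_cancel_right (Nat.cast_ne_zero.2 n.succ_ne_zero) hn] at power
    have nonneg (x : E) : 0 ≤ 1 + ‖x‖ := by positivity
    simpa only [Real.norm_of_nonneg (nonneg _), ENNReal.toReal_natCast, Real.rpow_natCast]
      using power

lemma memLp_of_norm_le_mul_one_add_norm_pow (moments : ∀ q : ENNReal, q ≠ ⊤ → MemLp id q μ)
    {f : E → G} (hf : AEStronglyMeasurable f μ) {C : ℝ} {n : ℕ}
    (growth : ∀ x, ‖f x‖ ≤ C * (1 + ‖x‖) ^ n) (hp : p ≠ ⊤) : MemLp f p μ := by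
  refine (memLp_one_add_norm_pow moments hp n).of_le_mul (c := C) hf (.of_forall fun x => ?_)
  rw [Real.norm_of_nonneg (by positivity)]
  exact growth x

end PolynomialGrowth

section GaussPi

variable {d : ℕ} {t : ℝ}

instance isProbabilityMeasure_gaussPi (d : ℕ) (t : ℝ) : IsProbabilityMeasure (gaussPi d t) := by
  unfold gaussPi
  infer_instance

lemma memLp_id_gaussPi (d : ℕ) (t : ℝ) (q : ENNReal) (hq : q ≠ ⊤) : MemLp id q (gaussPi d t) :=
  .of_eval fun j => (memLp_id_gaussianReal' q hq).comp_measurePreserving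
    (measurePreserving_eval (fun _ : Fin d => gaussianReal 0 t.toNNReal) j)

lemma isIsotropicFamily_eval_gaussPi (d : ℕ) (ht : 0 ≤ t) :
    IsIsotropicFamily (fun j (z : Fin d → ℝ) => z j) t (gaussPi d t) :=
  isIsotropicFamily_eval_pi (fun _ => memLp_id_gaussianReal' 2 ENNReal.ofNat_ne_top)
    (fun _ => integral_id_gaussianReal)
    fun _ => variance_id_gaussianReal.trans (Real.coe_toNNReal t ht)

lemma measurable_pd {f : (Fin d → ℝ) → ℝ} (hf : Continuous f) (j : Fin d) :
    Measurable (pd d f j) := by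
  have measurable_deriv := measurable_deriv_with_param
    (f := fun (y : Fin d → ℝ) (x : ℝ) => f (Function.update y j x))
    (by simp only [Function.uncurry_def]; fun_prop)
  exact measurable_deriv.comp (measurable_id.prodMk (measurable_pi_apply j))

lemma memLp_gaussPi_of_polynomial_growth {f : (Fin d → ℝ) → ℝ} (hf : Measurable f)
    (growth : ∃ C n, ∀ x, |f x| ≤ C * (1 + ‖x‖) ^ n) {p : ENNReal} (hp : p ≠ ⊤) :
    MemLp f p (gaussPi d t) := by
  obtain ⟨C, n, hCn⟩ := growth
  exact memLp_of_norm_le_mul_one_add_norm_pow (memLp_id_gaussPi d t) hf.aestronglyMeasurable hCn hp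

lemma memLp_pd_gaussPi_of_polynomial_growth {f : (Fin d → ℝ) → ℝ} (hf : Continuous f)
    (growth : ∃ C n, ∀ x, Real.sqrt (∑ j, (pd d f j x) ^ 2) ≤ C * (1 + ‖x‖) ^ n)
    {p : ENNReal} (hp : p ≠ ⊤) (j : Fin d) : MemLp (pd d f j) p (gaussPi d t) := by
  obtain ⟨C, n, hCn⟩ := growth
  refine memLp_gaussPi_of_polynomial_growth (measurable_pd hf j)
    ⟨C, n, fun x => (Real.abs_le_sqrt ?_).trans (hCn x)⟩ hp
  exact Finset.single_le_sum (f := fun i => pd d f i x ^ 2) (fun i _ => sq_nonneg _)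
    (Finset.mem_univ j)

end GaussPi

theorem gLoss_decomposition_general {α Ω ι : Type*} [Fintype ι] {mα : MeasurableSpace α}
    {mΩ : MeasurableSpace Ω} {μ : Measure α} {ν : Measure Ω} [IsProbabilityMeasure ν] {s : ℝ}
    (hs : s ≠ 0) {X : ι → Ω → ℝ} (hX : IsIsotropicFamily X s ν) {F : α → Ω → ℝ}
    (hF : MemLp (fun p : α × Ω => F p.1 p.2) 2 (μ.prod ν)) {a : α → ℝ} (ha : MemLp a 2 μ)
    {b : ι → α → ℝ} (hb : ∀ j, MemLp (b j) 2 μ) :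
    ∫ w, (∫ z, (F w z - a w - ∑ j, b j w * X j z) ^ 2 ∂ν) ∂μ
      = (∫ w, (∫ z, F w z ∂ν - a w) ^ 2 ∂μ)
        + s * ∫ w, (∑ j, (regressionCoeff X s ν (F w) j - b j w) ^ 2) ∂μ
        + ((∫ w, (∫ z, (F w z - ∫ z', F w z' ∂ν) ^ 2 ∂ν) ∂μ)
            - s * ∫ w, (∑ j, regressionCoeff X s ν (F w) j ^ 2) ∂μ) := by
  have hmean : MemLp (fun w => ∫ z, F w z ∂ν) 2 μ := memLp_two_integral hF
  have hcoeff (j : ι) : MemLp (fun w => regressionCoeff X s ν (F w) j) 2 μ :=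
    (memLp_two_integral_mul hF (hX.memLp j)).const_mul (1 / s)
  have mean_error : Integrable (fun w => (∫ z, F w z ∂ν - a w) ^ 2) μ :=
    (hmean.sub ha).integrable_sq
  have coeff_error :
      Integrable (fun w => s * ∑ j, (regressionCoeff X s ν (F w) j - b j w) ^ 2) μ :=
    (integrable_finsetSum _ fun j _ => ((hcoeff j).sub (hb j)).integrable_sq).const_mul s
  have total_variance : Integrable (fun w => ∫ z, (F w z - ∫ z', F w z' ∂ν) ^ 2 ∂ν) μ :=
    (hF.sub (hmean.comp_fst ν)).integrable_sq.integral_prod_left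
  have explained_variance :
      Integrable (fun w => s * ∑ j, regressionCoeff X s ν (F w) j ^ 2) μ :=
    (integrable_finsetSum _ fun j _ => (hcoeff j).integrable_sq).const_mul s
  have unexplained_variance : Integrable (fun w => ∫ z, (F w z - ∫ z', F w z' ∂ν) ^ 2 ∂ν
      - s * ∑ j, regressionCoeff X s ν (F w) j ^ 2) μ :=
    total_variance.sub explained_variance
  rw [← integral_const_mul, ← integral_const_mul, ← integral_add mean_error coeff_error,
    ← integral_sub total_variance explained_variance,
    ← integral_add (mean_error.fun_add coeff_error) unexplained_variance]
  refine integral_congr_ae ?_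
  filter_upwards [ae_memLp_two_of_memLp_prod hF] with w hFw
  rw [hX.integral_sq_sub_sub_sum_mul hs hFw, variance_eq_integral hFw.aemeasurable]

/-- Exact decomposition of the gradient-enhanced least squares loss:
`L(ψ) = ‖c − ψ‖²_{L²(ν_t)} + s·‖Ž − ∇ψ‖²_{L²(ν_t)} + R` where the remainder
`R = ∫∫(u(w+z) − c(w))² dν_s dν_t − s·∫‖Ž‖² dν_t` does not depend on `ψ`. -/
theorem gLoss_decomposition (d : ℕ) (hd : 1 ≤ d) (t s : ℝ) (ht : 0 < t) (hs : 0 < s)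
    (u : (Fin d → ℝ) → ℝ) (hu : Measurable u)
    (hu2 : Integrable
      (fun p : (Fin d → ℝ) × (Fin d → ℝ) => (u (p.1 + p.2)) ^ 2 * (1 + ∑ j, (p.2 j) ^ 2))
      ((gaussPi d t).prod (gaussPi d s)))
    (ψ : (Fin d → ℝ) → ℝ) (hψ : ContDiff ℝ 1 ψ)
    (hψ_growth : ∃ C n, ∀ x, |ψ x| ≤ C * (1 + ‖x‖) ^ n)
    (hgradψ_growth : ∃ C n, ∀ x, Real.sqrt (∑ j, (pd d ψ j x) ^ 2) ≤ C * (1 + ‖x‖) ^ n) :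
    gLoss d t s u ψ
      = (∫ w, (contVal d s u w - ψ w) ^ 2 ∂(gaussPi d t))
        + s * ∫ w, (∑ j, (zEst d s u w j - pd d ψ j w) ^ 2) ∂(gaussPi d t)
        + ((∫ w, (∫ z, (u (w + z) - contVal d s u w) ^ 2 ∂(gaussPi d s)) ∂(gaussPi d t))
            - s * ∫ w, (∑ j, (zEst d s u w j) ^ 2) ∂(gaussPi d t)) :=
  gLoss_decomposition_general hs.ne' (isIsotropicFamily_eval_gaussPi d hs.le)
    (memLp_two_of_integrable_sq_mul (hu.comp measurable_add).aestronglyMeasurable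
      (fun _ => le_add_of_nonneg_right (Finset.sum_nonneg fun _ _ => sq_nonneg _)) hu2)
    (memLp_gaussPi_of_polynomial_growth hψ.continuous.measurable hψ_growth ENNReal.ofNat_ne_top)
    (memLp_pd_gaussPi_of_polynomial_growth hψ.continuous hgradψ_growth ENNReal.ofNat_ne_top)
end
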